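/- Submodularity of log-det capacity: Let H_k ∈ ℂ^{n_{r,k} × n_t} for k ∈ [K] and P > 0, and define C_𝒦 := log det(I + P · Σ_{k∈𝒦} H_k^H H_k) for 𝒦 ⊆ [K]. Then for any 𝒜' ⊆ 𝒜 ⊆ [K] and any ℬ ⊆ [K], we have C_{𝒜∪ℬ} − C_𝒜 ≤ C_{𝒜'∪ℬ} − C_{𝒜'}. -/

import Mathlib

/-!
Write `G S = 1 + P ∑_{k ∈ S} Hₖᴴ Hₖ`, `X = G A'`, and let `M`, `N` be the contributions of the
indices in `A \ A'` and `B \ A`. Then `G A = X + M` and `G (A ∪ B) = X + M + N`, while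
`G (A' ∪ B)` dominates `X + N` in the Loewner order because `B \ A ⊆ B \ A'`.
The claim thus follows from monotonicity of `det` on positive definite matrices together with

`det (X + M + N) * det X ≤ det (X + M) * det (X + N)`.

Factoring `N = Vᴴ V`, the matrix determinant lemma turns this inequality into
`det (1 + V (X + M)⁻¹ Vᴴ) ≤ det (1 + V X⁻¹ Vᴴ)`, which holds since inversion is antitone in the
Loewner order and `det` is monotone. Monotonicity of `det` reduces, by the same lemma, to
`1 ≤ det (1 + S)` for positive semidefinite `S`, whose eigenvalues are nonnegative.
-/

namespace LogDet

open scoped ComplexOrder MatrixOrder Matrix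

variable {n : Type*} [Fintype n] [DecidableEq n]

theorem exists_conjTranspose_mul_self {M : Matrix n n ℂ} (hM : M.PosSemidef) :
    ∃ V : Matrix n n ℂ, M = Vᴴ * V := by
  obtain ⟨V, rfl⟩ := CStarAlgebra.nonneg_iff_eq_star_mul_self.mp hM.nonneg
  exact ⟨V, rfl⟩

/-- Every eigenvalue of `1 + S` is at least `1`, being the value of the quadratic form of `1 + S`
at a unit eigenvector. -/
theorem one_le_det_one_add {S : Matrix n n ℂ} (hS : S.PosSemidef) : 1 ≤ (1 + S).det := by
  have hH : (1 + S).IsHermitian := (Matrix.PosSemidef.one.add hS).isHermitian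
  rw [hH.det_eq_prod_eigenvalues]
  have h1 : ∀ i, 1 ≤ hH.eigenvalues i := by
    intro i
    have hv : RCLike.re (star ⇑(hH.eigenvectorBasis i) ⬝ᵥ ⇑(hH.eigenvectorBasis i)) = (1 : ℝ) := by
      rw [dotProduct_comm, ← EuclideanSpace.inner_eq_star_dotProduct,
        inner_self_eq_norm_sq_to_K, hH.eigenvectorBasis.orthonormal.1 i]
      simp
    rw [hH.eigenvalues_eq, Matrix.add_mulVec, Matrix.one_mulVec, dotProduct_add, map_add, hv]
    linarith [hS.re_dotProduct_nonneg ⇑(hH.eigenvectorBasis i)]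
  have h2 : (1 : ℝ) ≤ ∏ i, hH.eigenvalues i := by
    simpa using Finset.prod_le_prod (s := Finset.univ) (f := fun _ => (1 : ℝ))
      (fun _ _ => zero_le_one) fun i _ => h1 i
  have h3 : ((1 : ℝ) : ℂ) ≤ ((∏ i, hH.eigenvalues i : ℝ) : ℂ) := Complex.real_le_real.2 h2
  simpa using h3

theorem det_add_conjTranspose_mul_self {A : Matrix n n ℂ} (hA : A.PosDef) (V : Matrix n n ℂ) :
    (A + Vᴴ * V).det = A.det * (1 + V * A⁻¹ * Vᴴ).det :=
  Matrix.det_add_mul _ _ ((Matrix.isUnit_iff_isUnit_det A).1 hA.isUnit)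

theorem det_le_det_add {A S : Matrix n n ℂ} (hA : A.PosDef) (hS : S.PosSemidef) :
    A.det ≤ (A + S).det := by
  obtain ⟨V, rfl⟩ := exists_conjTranspose_mul_self hS
  rw [det_add_conjTranspose_mul_self hA]
  exact le_mul_of_one_le_right hA.det_pos.le
    (one_le_det_one_add (hA.inv.posSemidef.mul_mul_conjTranspose_same V))

/-- Inversion is antitone in the Loewner order. With `Y = X + M`, this rests on the identity
`X⁻¹ - Y⁻¹ = Y⁻¹ (M + M X⁻¹ M) Y⁻¹`. -/
theorem posSemidef_inv_sub_inv {X M : Matrix n n ℂ} (hX : X.PosDef) (hM : M.PosSemidef) :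
    (X⁻¹ - (X + M)⁻¹).PosSemidef := by
  have hY : (X + M).PosDef := hX.add_posSemidef hM
  have uX := (Matrix.isUnit_iff_isUnit_det X).1 hX.isUnit
  have uY := (Matrix.isUnit_iff_isUnit_det (X + M)).1 hY.isUnit
  have hZ : (M + M * X⁻¹ * M).PosSemidef := by
    refine hM.add ?_
    have h := hX.inv.posSemidef.conjTranspose_mul_mul_same M
    rwa [hM.isHermitian.eq] at h
  have hmid : (X + M) * (X⁻¹ - (X + M)⁻¹) * (X + M) = M + M * X⁻¹ * M := by
    rw [mul_sub, Matrix.mul_nonsing_inv _ uY, sub_mul, one_mul, add_mul X M X⁻¹,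
      Matrix.mul_nonsing_inv _ uX, add_mul, one_mul, mul_add, mul_assoc M X⁻¹ X,
      Matrix.nonsing_inv_mul _ uX, mul_one]
    abel
  have key : X⁻¹ - (X + M)⁻¹ = ((X + M)⁻¹)ᴴ * (M + M * X⁻¹ * M) * (X + M)⁻¹ := by
    rw [hY.inv.isHermitian.eq, ← hmid, mul_assoc, mul_assoc _ (X + M) (X + M)⁻¹,
      Matrix.mul_nonsing_inv _ uY, mul_one, ← mul_assoc, Matrix.nonsing_inv_mul _ uY, one_mul]
  rw [key]
  exact hZ.conjTranspose_mul_mul_same _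

/-- Log-submodularity of the determinant along positive semidefinite increments. -/
theorem det_mul_det_le {X M N : Matrix n n ℂ} (hX : X.PosDef) (hM : M.PosSemidef)
    (hN : N.PosSemidef) :
    (X + M + N).det * X.det ≤ (X + M).det * (X + N).det := by
  obtain ⟨V, rfl⟩ := exists_conjTranspose_mul_self hN
  have hY : (X + M).PosDef := hX.add_posSemidef hM
  rw [det_add_conjTranspose_mul_self hX, det_add_conjTranspose_mul_self hY, mul_assoc,
    mul_comm (Matrix.det (1 + _)) X.det]
  refine mul_le_mul_of_nonneg_left (mul_le_mul_of_nonneg_left ?_ hX.det_pos.le) hY.det_pos.le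
  have h1 : (1 + V * (X + M)⁻¹ * Vᴴ).PosDef :=
    Matrix.PosDef.one.add_posSemidef (hY.inv.posSemidef.mul_mul_conjTranspose_same V)
  have h2 := det_le_det_add h1
    ((posSemidef_inv_sub_inv hX hM).mul_mul_conjTranspose_same V)
  convert h2 using 2
  rw [mul_sub, sub_mul]
  abel

end LogDet

open Matrix BigOperators

/-- Submodularity of the log-det capacity function `C 𝒦 = log det(I + P Σ_{k∈𝒦} Hₖᴴ Hₖ)`. -/
theorem stmt_6 (K nt : ℕ) (nrk : Fin K → ℕ)
    (H : ∀ k : Fin K, Matrix (Fin (nrk k)) (Fin nt) ℂ)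
    (P : ℝ) (hP : 0 < P)
    (C : Finset (Fin K) → ℝ)
    (hC : ∀ S : Finset (Fin K),
      C S = Real.logb 2 ((1 + ∑ k ∈ S, (P : ℂ) • ((H k)ᴴ * H k)).det.re))
    (A' A B : Finset (Fin K)) (hA'A : A' ⊆ A) :
    C (A ∪ B) - C A ≤ C (A' ∪ B) - C A' := by
  open scoped ComplexOrder in
  have hterm : ∀ k, ((P : ℂ) • ((H k)ᴴ * H k)).PosSemidef := fun k =>
    (posSemidef_conjTranspose_mul_self (H k)).smul (by exact_mod_cast hP.le)
  generalize hF : (fun k => (P : ℂ) • ((H k)ᴴ * H k)) = F at *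
  have hFk : ∀ k, (P : ℂ) • ((H k)ᴴ * H k) = F k := fun k => congrFun hF k
  simp only [hFk] at hC hterm
  have hsum : ∀ S : Finset (Fin K), (∑ k ∈ S, F k).PosSemidef := fun S =>
    posSemidef_sum S fun k _ => hterm k
  have hG : ∀ S : Finset (Fin K), (1 + ∑ k ∈ S, F k).PosDef := fun S =>
    PosDef.one.add_posSemidef (hsum S)
  have hsplit : ∀ S T : Finset (Fin K), Disjoint S T →
      1 + ∑ k ∈ S ∪ T, F k = (1 + ∑ k ∈ S, F k) + ∑ k ∈ T, F k := by
    intro S T h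
    rw [Finset.sum_union h, add_assoc]
  have eA : A = A' ∪ A \ A' := (Finset.union_sdiff_of_subset hA'A).symm
  have eAB : A ∪ B = A ∪ B \ A := Finset.union_sdiff_self_eq_union.symm
  have eA'B : A' ∪ B = (A' ∪ B \ A) ∪ (B ∩ A) \ A' := by
    ext k
    have := @hA'A k
    simp only [Finset.mem_union, Finset.mem_sdiff, Finset.mem_inter]
    tauto
  have d1 : Disjoint A' (A \ A') := Finset.disjoint_sdiff
  have d2 : Disjoint A (B \ A) := Finset.disjoint_sdiff
  have d3 : Disjoint A' (B \ A) := d2.mono_left hA'A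
  have d4 : Disjoint (A' ∪ B \ A) ((B ∩ A) \ A') := by
    rw [Finset.disjoint_left]
    intro k
    simp only [Finset.mem_union, Finset.mem_sdiff, Finset.mem_inter]
    tauto
  have key := LogDet.det_mul_det_le (hG A') (hsum (A \ A')) (hsum (B \ A))
  rw [← hsplit _ _ d1, ← eA, ← hsplit _ _ d2, ← eAB, ← hsplit _ _ d3] at key
  have mono := LogDet.det_le_det_add (hG (A' ∪ B \ A)) (hsum ((B ∩ A) \ A'))
  rw [← hsplit _ _ d4, ← eA'B] at mono
  have key2 := key.trans (mul_le_mul_of_nonneg_left mono (hG A).det_pos.le)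
  -- Positive complex numbers have zero imaginary part, so the inequality passes to real parts.
  have hpos : ∀ S : Finset (Fin K), 0 < (1 + ∑ k ∈ S, F k).det.re := fun S =>
    (Complex.pos_iff.1 (hG S).det_pos).1
  have him : ∀ S : Finset (Fin K), (1 + ∑ k ∈ S, F k).det.im = 0 := fun S =>
    (Complex.pos_iff.1 (hG S).det_pos).2.symm
  have key3 := (Complex.le_def.1 key2).1
  simp only [Complex.mul_re, him, mul_zero, sub_zero] at key3
  have key4 := Real.logb_le_logb_of_le (b := 2) (by norm_num) (mul_pos (hpos _) (hpos _)) key3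
  rw [Real.logb_mul (hpos _).ne' (hpos _).ne', Real.logb_mul (hpos _).ne' (hpos _).ne'] at key4
  rw [hC, hC, hC, hC]
  linarith
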